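/- Let u: ℝ^n → ℝ be a spacelike convex C² function, and fix x'₀ ∈ ℝ^{n−2}. Define ũ(x₁,x₂) := u(x₁,x₂,x'₀). Then the mean curvature of the graph of ũ in ℝ^{2,1} satisfies H₁[ũ](x₁,x₂) ≤ H₁[u](x₁,x₂,x'₀) for all (x₁,x₂) ∈ ℝ². -/

import Mathlib

open Finset

noncomputable def pd {m : ℕ} (u : (Fin m → ℝ) → ℝ) (i : Fin m) (x : Fin m → ℝ) : ℝ :=
  fderiv ℝ u x (Pi.single i 1)

noncomputable def H1 {m : ℕ} (u : (Fin m → ℝ) → ℝ) (x : Fin m → ℝ) : ℝ :=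
  ∑ i, pd (fun y => pd u i y / Real.sqrt (1 - ∑ j, (pd u j y) ^ 2)) i x

def Spacelike {m : ℕ} (u : (Fin m → ℝ) → ℝ) : Prop :=
  ∀ x, ∑ j, (pd u j x) ^ 2 < 1

lemma scalar_ineq (C D s t β w W : ℝ) (hC : 0 ≤ C) (hβ : 0 ≤ β) (hD : 0 ≤ D)
    (hw : 0 < w) (hW : 0 < W) (hWw : W ^ 2 = w ^ 2 + β) (ht : t ^ 2 ≤ β * D) :
    C / W + s ^ 2 / W ^ 3 ≤ (C + D) / w + (s + t) ^ 2 / w ^ 3 := by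
  have hle : w ≤ W := by
    refine (sq_le_sq₀ hw.le hW.le).1 ?_
    linarith
  have key : s ^ 2 / W ^ 2 ≤ D + (s + t) ^ 2 / w ^ 2 := by
    have h0 : 0 ≤ D * w ^ 4 + β * (s + t) ^ 2 + 2 * (s + t) * t * w ^ 2 := by
      rcases hβ.eq_or_lt with h | h
      · have : t = 0 := by
          rw [← h] at ht
          have : t ^ 2 = 0 := le_antisymm (by linarith) (sq_nonneg t)
          simpa using this
        rw [← h, this]
        have := mul_nonneg hD (by positivity : 0 ≤ w ^ 4)
        linarith
      · refine nonneg_of_mul_nonneg_right (a := β) ?_ h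
        nlinarith [sq_nonneg (t * w ^ 2 + β * (s + t)),
          mul_le_mul_of_nonneg_right ht (by positivity : 0 ≤ w ^ 4)]
    rw [div_le_iff₀ (by positivity), ← sub_nonneg]
    have e : (D + (s + t) ^ 2 / w ^ 2) * W ^ 2 - s ^ 2
        = ((D * w ^ 4 + β * (s + t) ^ 2 + 2 * (s + t) * t * w ^ 2)
          + (β * D - t ^ 2) * w ^ 2) / w ^ 2 := by
      rw [hWw]
      field_simp
      ring
    rw [e]
    have : 0 ≤ (β * D - t ^ 2) * w ^ 2 := mul_nonneg (by linarith) (by positivity)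
    positivity
  have e1 : C / W + s ^ 2 / W ^ 3 = (C + s ^ 2 / W ^ 2) / W := by field_simp
  have e2 : (C + D) / w + (s + t) ^ 2 / w ^ 3 = (C + (D + (s + t) ^ 2 / w ^ 2)) / w := by
    field_simp
    try ring
  rw [e1, e2]
  have : 0 ≤ D + (s + t) ^ 2 / w ^ 2 := by positivity
  gcongr

lemma pd_eq_deriv {m : ℕ} {f : (Fin m → ℝ) → ℝ} {x : Fin m → ℝ} (i : Fin m)
    (hf : DifferentiableAt ℝ f x) :
    HasDerivAt (fun t : ℝ => f (x + t • Pi.single i 1)) (pd f i x) 0 := by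
  have h1 : HasDerivAt (fun t : ℝ => x + t • (Pi.single i 1 : Fin m → ℝ)) (Pi.single i 1) 0 := by
    simpa using ((hasDerivAt_id (0 : ℝ)).smul_const (Pi.single i 1 : Fin m → ℝ)).const_add x
  have h2 : HasFDerivAt f (fderiv ℝ f x) (x + (0 : ℝ) • (Pi.single i 1 : Fin m → ℝ)) := by
    simpa using hf.hasFDerivAt
  exact h2.comp_hasDerivAt (0 : ℝ) h1

lemma pd_contDiff {m : ℕ} {u : (Fin m → ℝ) → ℝ} (hu : ContDiff ℝ 2 u) (i : Fin m) :
    ContDiff ℝ 1 (pd u i) := by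
  have : ContDiff ℝ 1 (fderiv ℝ u) := hu.fderiv_right (by norm_num)
  exact this.clm_apply contDiff_const

lemma H1_formula {m : ℕ} {u : (Fin m → ℝ) → ℝ} (hu : ContDiff ℝ 2 u) (hsp : Spacelike u)
    (x : Fin m → ℝ) :
    H1 u x = ∑ i, (pd (pd u i) i x / √(1 - ∑ j, (pd u j x) ^ 2)
      + pd u i x * (∑ j, pd u j x * pd (pd u j) i x) / √(1 - ∑ j, (pd u j x) ^ 2) ^ 3) := by
  unfold H1
  refine Finset.sum_congr rfl fun i _ => ?_
  have hd : ∀ j, Differentiable ℝ (pd u j) := fun j =>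
    (pd_contDiff hu j).differentiable (by norm_num)
  have hpos : ∀ y, 0 < 1 - ∑ j, (pd u j y) ^ 2 := fun y => by
    have := hsp y
    linarith
  have hF : DifferentiableAt ℝ (fun y => pd u i y / √(1 - ∑ j, (pd u j y) ^ 2)) x := by
    simp only [div_eq_mul_inv]
    refine (hd i x).fun_mul (DifferentiableAt.fun_inv ?_ (Real.sqrt_ne_zero'.2 (hpos x)))
    refine DifferentiableAt.sqrt ?_ (hpos x).ne'
    refine DifferentiableAt.const_sub ?_ _
    exact DifferentiableAt.fun_sum fun j _ => (hd j x).pow 2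
  have h1 := pd_eq_deriv i hF
  have hg : ∀ j, HasDerivAt (fun t : ℝ => pd u j (x + t • Pi.single i 1)) (pd (pd u j) i x) 0 :=
    fun j => pd_eq_deriv i (hd j x)
  have hs := ((HasDerivAt.fun_sum fun j (_ : j ∈ Finset.univ) => (hg j).fun_pow 2).const_sub 1).sqrt
    (by simpa using (hpos x).ne')
  have h2 := (hg i).fun_div hs (by simpa using Real.sqrt_ne_zero'.2 (hpos x))
  rw [h1.unique h2]
  have hw : √(1 - ∑ j, (pd u j x) ^ 2) ≠ 0 := Real.sqrt_ne_zero'.2 (hpos x)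
  have e : ∑ j, 2 * pd u j x * pd (pd u j) i x = 2 * ∑ j, pd u j x * pd (pd u j) i x := by
    rw [Finset.mul_sum]
    exact Finset.sum_congr rfl fun j _ => by ring
  simp only [zero_smul, add_zero, Nat.cast_ofNat, Nat.add_one_sub_one, pow_one, e]
  generalize √(1 - ∑ j, (pd u j x) ^ 2) = w at *
  field_simp
  try ring

noncomputable def sliceL (n : ℕ) : (Fin 2 → ℝ) →L[ℝ] (Fin (2 + n) → ℝ) :=
  LinearMap.toContinuousLinearMap
    { toFun := fun v => Fin.append v 0
      map_add' := fun v w => by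
        ext i
        refine Fin.addCases (fun i => ?_) (fun i => ?_) i <;> simp
      map_smul' := fun c v => by
        ext i
        refine Fin.addCases (fun i => ?_) (fun i => ?_) i <;> simp }

lemma sliceL_apply (n : ℕ) (v : Fin 2 → ℝ) : sliceL n v = Fin.append v 0 := rfl

lemma append_eq {n : ℕ} (x0 : Fin n → ℝ) (q : Fin 2 → ℝ) :
    Fin.append q x0 = sliceL n q + Fin.append 0 x0 := by
  rw [sliceL_apply]
  ext i
  refine Fin.addCases (fun i => ?_) (fun i => ?_) i <;> simp

lemma sliceL_single (n : ℕ) (i : Fin 2) :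
    sliceL n (Pi.single i 1) = Pi.single (Fin.castAdd n i) 1 := by
  rw [sliceL_apply]
  ext j
  refine Fin.addCases (fun j => ?_) (fun j => ?_) j
  · simp [Pi.single_apply]
  · simp only [Fin.append_right, Pi.zero_apply, Pi.single_apply]
    rw [if_neg]
    intro h
    have := congrArg Fin.val h
    simp at this
    omega

lemma pd_slice {n : ℕ} {f : (Fin (2 + n) → ℝ) → ℝ} (hf : Differentiable ℝ f)
    (x0 : Fin n → ℝ) (i : Fin 2) :
    pd (fun q : Fin 2 → ℝ => f (Fin.append q x0)) i
      = fun q => pd f (Fin.castAdd n i) (Fin.append q x0) := by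
  funext q
  have h1 : HasFDerivAt (fun q : Fin 2 → ℝ => Fin.append q x0) (sliceL n) q := by
    have : (fun q : Fin 2 → ℝ => Fin.append q x0) = fun q => sliceL n q + Fin.append 0 x0 :=
      funext (append_eq x0)
    rw [this]
    exact (sliceL n).hasFDerivAt.add_const _
  have h2 : HasFDerivAt (fun q : Fin 2 → ℝ => f (Fin.append q x0)) _ q :=
    (hf (Fin.append q x0)).hasFDerivAt.comp q h1
  unfold pd
  rw [h2.fderiv, ContinuousLinearMap.comp_apply, sliceL_single]

lemma pd_pd {m : ℕ} {u : (Fin m → ℝ) → ℝ} (hu : ContDiff ℝ 2 u) (i j : Fin m) (x : Fin m → ℝ) :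
    pd (pd u j) i x = fderiv ℝ (fderiv ℝ u) x (Pi.single i 1) (Pi.single j 1) := by
  have h : Differentiable ℝ (fderiv ℝ u) :=
    (hu.fderiv_right (m := 1) (by norm_num)).differentiable (by norm_num)
  have h2 : HasFDerivAt (pd u j) _ x :=
    (h x).hasFDerivAt.clm_apply (hasFDerivAt_const (Pi.single j 1 : Fin m → ℝ) x)
  rw [pd, h2.fderiv]
  simp

lemma hess_nonneg {m : ℕ} {u : (Fin m → ℝ) → ℝ} (hu : ContDiff ℝ 2 u)
    (hconv : ConvexOn ℝ Set.univ u) (x v : Fin m → ℝ) :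
    0 ≤ fderiv ℝ (fderiv ℝ u) x v v := by
  have h : Differentiable ℝ (fderiv ℝ u) :=
    (hu.fderiv_right (m := 1) (by norm_num)).differentiable (by norm_num)
  have hud : Differentiable ℝ u := hu.differentiable (by norm_num)
  have hl : ∀ t : ℝ, HasDerivAt (fun t : ℝ => x + t • v) v t := fun t => by
    simpa using ((hasDerivAt_id t).smul_const v).const_add x
  have hφ : ∀ t : ℝ, HasDerivAt (fun t : ℝ => u (x + t • v)) (fderiv ℝ u (x + t • v) v) t :=
    fun t => (hud (x + t • v)).hasFDerivAt.comp_hasDerivAt t (hl t)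
  have hc : ConvexOn ℝ Set.univ (fun t : ℝ => u (x + t • v)) := by
    refine ⟨convex_univ, fun a _ b _ p q hp hq hpq => ?_⟩
    have := hconv.2 (Set.mem_univ (x + a • v)) (Set.mem_univ (x + b • v)) hp hq hpq
    convert this using 2
    ext k
    simp only [Pi.add_apply, Pi.smul_apply, smul_eq_mul]
    linear_combination (-(x k)) * hpq
  have hm := hc.monotoneOn_deriv (fun t _ => (hφ t).differentiableAt)
  rw [monotoneOn_univ] at hm
  have hn := hm.deriv_nonneg (x := 0)
  have e : deriv (fun t : ℝ => u (x + t • v)) = fun t => fderiv ℝ u (x + t • v) v :=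
    funext fun t => (hφ t).deriv
  rw [e] at hn
  have h3 : HasFDerivAt (fderiv ℝ u) (fderiv ℝ (fderiv ℝ u) x) (x + (0 : ℝ) • v) := by
    simpa using (h x).hasFDerivAt
  have h4 : HasDerivAt (fun t : ℝ => fderiv ℝ u (x + t • v)) (fderiv ℝ (fderiv ℝ u) x v) 0 :=
    h3.comp_hasDerivAt (0 : ℝ) (hl 0)
  have h5 : HasDerivAt (fun t : ℝ => fderiv ℝ u (x + t • v) v)
      (fderiv ℝ (fderiv ℝ u) x v v) 0 := by
    have := h4.clm_apply (hasDerivAt_const (0 : ℝ) v)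
    simpa only [map_zero, add_zero] using this
  rw [h5.deriv] at hn
  exact hn

lemma hess_decomp {m : ℕ} {u : (Fin m → ℝ) → ℝ} (hu : ContDiff ℝ 2 u)
    (hconv : ConvexOn ℝ Set.univ u) (x : Fin m → ℝ) :
    ∃ (K : ℕ) (v : Fin K → Fin m → ℝ), ∀ i j, pd (pd u j) i x = ∑ k, v k i * v k j := by
  have hsym : IsSymmSndFDerivAt ℝ u x := hu.contDiffAt.isSymmSndFDerivAt (by simp)
  let M : Matrix (Fin m) (Fin m) ℝ := Matrix.of fun i j => pd (pd u j) i x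
  have hM : M.PosSemidef := by
    refine .of_dotProduct_mulVec_nonneg ?_ fun y => ?_
    · ext i j
      simp only [M, Matrix.conjTranspose_apply, Matrix.of_apply, star_trivial, pd_pd hu]
      exact hsym _ _
    · have := hess_nonneg hu hconv x y
      have hy : y = ∑ i, y i • (Pi.single i 1 : Fin m → ℝ) := by
        ext k
        simp [Finset.sum_apply, Pi.single_apply]
      rw [hy] at this
      simp only [map_sum, map_smul, _root_.sum_apply, _root_.smul_apply,
        smul_eq_mul, ← pd_pd hu] at this
      refine this.trans_eq ?_
      simp only [dotProduct, Matrix.mulVec, M, Matrix.of_apply, star_trivial, Finset.mul_sum]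
      try rw [Finset.sum_comm]
      refine Finset.sum_congr rfl fun i _ => Finset.sum_congr rfl fun j _ => ?_
      ring
  obtain ⟨K, v, hv⟩ := Matrix.posSemidef_iff_eq_sum_vecMulVec.1 hM
  refine ⟨K, v, fun i j => ?_⟩
  have := congrFun (congrFun hv i) j
  simpa [M, Matrix.sum_apply, Matrix.vecMulVec_apply] using this

lemma sum_rearr {m K : ℕ} (g : Fin m → ℝ) (v : Fin K → Fin m → ℝ) (w : ℝ) :
    ∑ i, ((∑ k, v k i * v k i) / w + g i * (∑ j, g j * ∑ k, v k i * v k j) / w ^ 3)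
      = ∑ k, ((∑ i, v k i ^ 2) / w + (∑ i, g i * v k i) ^ 2 / w ^ 3) := by
  rw [Finset.sum_add_distrib, Finset.sum_add_distrib, ← Finset.sum_div, ← Finset.sum_div,
    ← Finset.sum_div, ← Finset.sum_div]
  congr 2
  · rw [Finset.sum_comm]
    simp only [pow_two]
  · have e : ∀ k, (∑ i, g i * v k i) ^ 2 = ∑ i, ∑ j, (g i * v k i) * (g j * v k j) := fun k => by
      rw [pow_two, Finset.sum_mul_sum]
    simp only [e, Finset.mul_sum]
    conv_lhs => enter [2, i]; rw [Finset.sum_comm]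
    rw [Finset.sum_comm]
    refine Finset.sum_congr rfl fun k _ => Finset.sum_congr rfl fun i _ =>
      Finset.sum_congr rfl fun j _ => ?_
    ring

theorem mean_curvature_of_slice {n : ℕ} (u : (Fin (2 + n) → ℝ) → ℝ)
    (hu : ContDiff ℝ 2 u) (hsp : Spacelike u)
    (hconv : ConvexOn ℝ Set.univ u)
    (x0 : Fin n → ℝ) (p : Fin 2 → ℝ) :
    H1 (fun q : Fin 2 → ℝ => u (Fin.append q x0)) p ≤ H1 u (Fin.append p x0) := by
  have hud : Differentiable ℝ u := hu.differentiable (by norm_num)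
  have hpd : ∀ j, Differentiable ℝ (pd u j) := fun j =>
    (pd_contDiff hu j).differentiable (by norm_num)
  have hap : ContDiff ℝ 2 (fun q : Fin 2 → ℝ => u (Fin.append q x0)) := by
    have e : (fun q : Fin 2 → ℝ => u (Fin.append q x0))
        = fun q => u (sliceL n q + Fin.append 0 x0) := funext fun q => by rw [← append_eq]
    rw [e]
    exact hu.comp ((sliceL n).contDiff.add contDiff_const)
  have hsp' : Spacelike (fun q : Fin 2 → ℝ => u (Fin.append q x0)) := by
    intro q
    have h := hsp (Fin.append q x0)
    rw [Fin.sum_univ_add] at h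
    simp only [pd_slice hud x0]
    have : 0 ≤ ∑ j, (pd u (Fin.natAdd 2 j) (Fin.append q x0)) ^ 2 :=
      Finset.sum_nonneg fun j _ => sq_nonneg _
    linarith
  obtain ⟨K, v, hv⟩ := hess_decomp hu hconv (Fin.append p x0)
  have hW := hsp' p
  have hw := hsp (Fin.append p x0)
  rw [H1_formula hap hsp', H1_formula hu hsp]
  simp only [pd_slice hud x0, pd_slice (hpd _) x0, hv] at hW ⊢
  rw [sum_rearr (fun i => pd u (Fin.castAdd n i) (Fin.append p x0))
    (fun k i => v k (Fin.castAdd n i)), sum_rearr (fun i => pd u i (Fin.append p x0))]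
  refine Finset.sum_le_sum fun k _ => ?_
  have hWs := Real.sq_sqrt (sub_nonneg.2 hW.le)
  have hws := Real.sq_sqrt (sub_nonneg.2 hw.le)
  have hWp := Real.sqrt_pos.2 (sub_pos.2 hW)
  have hwp := Real.sqrt_pos.2 (sub_pos.2 hw)
  set w := √(1 - ∑ j, (pd u j (Fin.append p x0)) ^ 2)
  rw [Fin.sum_univ_add] at hws
  rw [Fin.sum_univ_add (fun i => v k i ^ 2), Fin.sum_univ_add (fun i => pd u i _ * v k i)]
  refine scalar_ineq _ _ _ _ (∑ j, (pd u (Fin.natAdd 2 j) (Fin.append p x0)) ^ 2) _ _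
    (Finset.sum_nonneg fun j _ => sq_nonneg _) (Finset.sum_nonneg fun j _ => sq_nonneg _)
    (Finset.sum_nonneg fun j _ => sq_nonneg _) hwp hWp ?_
    (Finset.sum_mul_sq_le_sq_mul_sq _ _ _)
  linarith
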